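/- arXiv:1409.5184 — 4 statements merged into one kernel-verified Lean document; each statement's English description precedes it below -/
import Mathlib

section
/- Let (H, m, η, Δ, ε) be a bialgebra over a field k and let α: H → H be a bialgebra automorphism. Define a new multiplication a∗b = α(ab) and a new comultiplication Δ'(h) = Δ(α⁻¹(h)). Then H_α = (H, α, ∗, 1_H, Δ', ε) is a monoidal Hom-bialgebra with twisting automorphism α; that is: α(a)∗(b∗c) = (a∗b)∗α(c); a∗1_H = 1_H∗a = α(a); α(a∗b)=α(a)∗α(b) and α(1_H)=1_H; writing Δ'(h)=h₁'⊗h₂', one has α⁻¹(h₁')⊗Δ'(h₂') = Δ'(h₁')⊗α⁻¹(h₂') and ε(h₁')h₂' = h₁'ε(h₂') = α⁻¹(h); Δ'∘α=(α⊗α)∘Δ' and ε∘α=ε; and Δ' and ε are multiplicative and unital with respect to ∗. -/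
open TensorProduct

noncomputable section

/-- A (unital) monoidal Hom-bialgebra, following Caenepeel–Goyvaerts.
The algebra axioms are stated pointwise, the coalgebra axioms at the level of
linear maps (using the standard vector-space associator to compare the two
sides of Hom-coassociativity). -/
structure MonoidalHomBialgebra (k : Type) [Field k] (H : Type) [AddCommGroup H] [Module k H] where
  mul : H →ₗ[k] H →ₗ[k] H
  one : H
  comul : H →ₗ[k] H ⊗[k] H
  counit : H →ₗ[k] k
  aut : H ≃ₗ[k] H
  hom_assoc : ∀ a b c, mul (aut a) (mul b c) = mul (mul a b) (aut c)
  mulOne : ∀ a, mul a one = aut a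
  oneMul : ∀ a, mul one a = aut a
  aut_mul : ∀ a b, aut (mul a b) = mul (aut a) (aut b)
  aut_one : aut one = one
  coassoc :
    (TensorProduct.assoc k H H H).toLinearMap ∘ₗ
        (TensorProduct.map comul aut.symm.toLinearMap) ∘ₗ comul =
      (TensorProduct.map aut.symm.toLinearMap comul) ∘ₗ comul
  counit_left :
    (TensorProduct.lid k H).toLinearMap ∘ₗ (TensorProduct.map counit LinearMap.id) ∘ₗ comul =
      aut.symm.toLinearMap
  counit_right :
    (TensorProduct.rid k H).toLinearMap ∘ₗ (TensorProduct.map LinearMap.id counit) ∘ₗ comul =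
      aut.symm.toLinearMap
  comul_aut :
    comul ∘ₗ aut.toLinearMap = (TensorProduct.map aut.toLinearMap aut.toLinearMap) ∘ₗ comul
  counit_aut : counit ∘ₗ aut.toLinearMap = counit
  comul_mul :
    comul ∘ₗ TensorProduct.lift mul =
      (TensorProduct.map (TensorProduct.lift mul) (TensorProduct.lift mul)) ∘ₗ
        (TensorProduct.tensorTensorTensorComm k H H H H).toLinearMap ∘ₗ
          (TensorProduct.map comul comul)
  comul_one : comul one = one ⊗ₜ[k] one
  counit_mul : ∀ a b, counit (mul a b) = counit a * counit b
  counit_one : counit one = 1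

/-- A monoidal Hom-Hopf algebra: a monoidal Hom-bialgebra with an antipode. -/
structure MonoidalHomHopf (k : Type) [Field k] (H : Type) [AddCommGroup H] [Module k H]
    extends MonoidalHomBialgebra k H where
  antipode : H →ₗ[k] H
  antipode_aut : antipode ∘ₗ aut.toLinearMap = aut.toLinearMap ∘ₗ antipode
  antipode_mul_left :
    TensorProduct.lift mul ∘ₗ (TensorProduct.map antipode LinearMap.id) ∘ₗ comul =
      LinearMap.toSpanSingleton k H one ∘ₗ counit
  antipode_mul_right :
    TensorProduct.lift mul ∘ₗ (TensorProduct.map LinearMap.id antipode) ∘ₗ comul =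
      LinearMap.toSpanSingleton k H one ∘ₗ counit

variable {k : Type} [Field k] {H : Type} [AddCommGroup H] [Module k H]

/-- A right (H,α)-Hom-comodule. -/
structure HomComodule (Hb : MonoidalHomBialgebra k H) (M : Type) [AddCommGroup M] [Module k M] where
  coact : M →ₗ[k] M ⊗[k] H
  aut : M ≃ₗ[k] M
  coassoc :
    (TensorProduct.map aut.symm.toLinearMap Hb.comul) ∘ₗ coact =
      (TensorProduct.assoc k M H H).toLinearMap ∘ₗ
        (TensorProduct.map coact Hb.aut.symm.toLinearMap) ∘ₗ coact
  counit :
    (TensorProduct.rid k M).toLinearMap ∘ₗ (TensorProduct.map LinearMap.id Hb.counit) ∘ₗ coact =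
      aut.symm.toLinearMap
  coact_aut :
    coact ∘ₗ aut.toLinearMap = (TensorProduct.map aut.toLinearMap Hb.aut.toLinearMap) ∘ₗ coact

/-- A left (H,α)-Hom-comodule. -/
structure HomLeftComodule (Hb : MonoidalHomBialgebra k H) (M : Type) [AddCommGroup M] [Module k M] where
  coact : M →ₗ[k] H ⊗[k] M
  aut : M ≃ₗ[k] M
  coassoc :
    (TensorProduct.map Hb.comul aut.symm.toLinearMap) ∘ₗ coact =
      (TensorProduct.assoc k H H M).symm.toLinearMap ∘ₗ
        (TensorProduct.map Hb.aut.symm.toLinearMap coact) ∘ₗ coact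
  counit :
    (TensorProduct.lid k M).toLinearMap ∘ₗ (TensorProduct.map Hb.counit LinearMap.id) ∘ₗ coact =
      aut.symm.toLinearMap
  coact_aut :
    coact ∘ₗ aut.toLinearMap = (TensorProduct.map Hb.aut.toLinearMap aut.toLinearMap) ∘ₗ coact

/-- A right (H,α)-Hom-comodule algebra. -/
structure HomComoduleAlgebra (Hb : MonoidalHomBialgebra k H) (A : Type) [AddCommGroup A] [Module k A] where
  mul : A →ₗ[k] A →ₗ[k] A
  one : A
  aut : A ≃ₗ[k] A
  hom_assoc : ∀ a b c, mul (aut a) (mul b c) = mul (mul a b) (aut c)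
  mulOne : ∀ a, mul a one = aut a
  oneMul : ∀ a, mul one a = aut a
  aut_mul : ∀ a b, aut (mul a b) = mul (aut a) (aut b)
  aut_one : aut one = one
  coact : A →ₗ[k] A ⊗[k] H
  coassoc :
    (TensorProduct.map aut.symm.toLinearMap Hb.comul) ∘ₗ coact =
      (TensorProduct.assoc k A H H).toLinearMap ∘ₗ
        (TensorProduct.map coact Hb.aut.symm.toLinearMap) ∘ₗ coact
  counit :
    (TensorProduct.rid k A).toLinearMap ∘ₗ (TensorProduct.map LinearMap.id Hb.counit) ∘ₗ coact =
      aut.symm.toLinearMap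
  coact_aut :
    coact ∘ₗ aut.toLinearMap = (TensorProduct.map aut.toLinearMap Hb.aut.toLinearMap) ∘ₗ coact
  coact_mul :
    coact ∘ₗ TensorProduct.lift mul =
      (TensorProduct.map (TensorProduct.lift mul) (TensorProduct.lift Hb.mul)) ∘ₗ
        (TensorProduct.tensorTensorTensorComm k A H A H).toLinearMap ∘ₗ
          (TensorProduct.map coact coact)
  coact_one : coact one = one ⊗ₜ[k] Hb.one

variable {A : Type} [AddCommGroup A] [Module k A]

/-- A right (A,β)-Hom-module. -/
structure HomModule {Hb : MonoidalHomBialgebra k H} (Ac : HomComoduleAlgebra Hb A)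
    (M : Type) [AddCommGroup M] [Module k M] where
  act : M →ₗ[k] A →ₗ[k] M
  aut : M ≃ₗ[k] M
  act_act : ∀ m a b, act (act m a) (Ac.aut b) = act (aut m) (Ac.mul a b)
  act_one : ∀ m, act m Ac.one = aut m
  aut_act : ∀ m a, aut (act m a) = act (aut m) (Ac.aut a)

/-- A right Hom-module over the subalgebra of `A` carved out by `Bset`
(typically the coinvariants `B = A^{co H}`): the action is a bilinear map
`M × A → M` whose Hom-module axioms are only required on `Bset`. -/
structure HomModuleOn {Hb : MonoidalHomBialgebra k H} (Ac : HomComoduleAlgebra Hb A)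
    (Bset : Set A) (M : Type) [AddCommGroup M] [Module k M] where
  act : M →ₗ[k] A →ₗ[k] M
  aut : M ≃ₗ[k] M
  act_act : ∀ m, ∀ b ∈ Bset, ∀ b' ∈ Bset, act (act m b) (Ac.aut b') = act (aut m) (Ac.mul b b')
  act_one : ∀ m, act m Ac.one = aut m
  aut_act : ∀ m, ∀ b ∈ Bset, aut (act m b) = act (aut m) (Ac.aut b)

/-- A left Hom-module over the subalgebra of `A` carved out by `Bset`. -/
structure HomLeftModuleOn {Hb : MonoidalHomBialgebra k H} (Ac : HomComoduleAlgebra Hb A)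
    (Bset : Set A) (M : Type) [AddCommGroup M] [Module k M] where
  act : A →ₗ[k] M →ₗ[k] M
  aut : M ≃ₗ[k] M
  act_act : ∀ m, ∀ b ∈ Bset, ∀ b' ∈ Bset, act (Ac.aut b) (act b' m) = act (Ac.mul b b') (aut m)
  act_one : ∀ m, act Ac.one m = aut m
  aut_act : ∀ m, ∀ b ∈ Bset, aut (act b m) = act (Ac.aut b) (aut m)

/-- A right-right (H,A)-Hom-Hopf module (a relative Hom-Hopf module). -/
structure HomHopfModule {Hb : MonoidalHomBialgebra k H} (Ac : HomComoduleAlgebra Hb A)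
    (N : Type) [AddCommGroup N] [Module k N] where
  act : N →ₗ[k] A →ₗ[k] N
  aut : N ≃ₗ[k] N
  act_act : ∀ n a b, act (act n a) (Ac.aut b) = act (aut n) (Ac.mul a b)
  act_one : ∀ n, act n Ac.one = aut n
  aut_act : ∀ n a, aut (act n a) = act (aut n) (Ac.aut a)
  coact : N →ₗ[k] N ⊗[k] H
  coassoc :
    (TensorProduct.map aut.symm.toLinearMap Hb.comul) ∘ₗ coact =
      (TensorProduct.assoc k N H H).toLinearMap ∘ₗ
        (TensorProduct.map coact Hb.aut.symm.toLinearMap) ∘ₗ coact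
  counit :
    (TensorProduct.rid k N).toLinearMap ∘ₗ (TensorProduct.map LinearMap.id Hb.counit) ∘ₗ coact =
      aut.symm.toLinearMap
  coact_aut :
    coact ∘ₗ aut.toLinearMap = (TensorProduct.map aut.toLinearMap Hb.aut.toLinearMap) ∘ₗ coact
  compat :
    coact ∘ₗ TensorProduct.lift act =
      (TensorProduct.map (TensorProduct.lift act) (TensorProduct.lift Hb.mul)) ∘ₗ
        (TensorProduct.tensorTensorTensorComm k N H A H).toLinearMap ∘ₗ
          (TensorProduct.map coact Ac.coact)

/-- A left-right (H,A)-Hom-Hopf module. -/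
structure LRHomHopfModule {Hb : MonoidalHomBialgebra k H} (Ac : HomComoduleAlgebra Hb A)
    (N : Type) [AddCommGroup N] [Module k N] where
  act : A →ₗ[k] N →ₗ[k] N
  aut : N ≃ₗ[k] N
  act_act : ∀ n a b, act (Ac.aut a) (act b n) = act (Ac.mul a b) (aut n)
  act_one : ∀ n, act Ac.one n = aut n
  aut_act : ∀ n a, aut (act a n) = act (Ac.aut a) (aut n)
  coact : N →ₗ[k] N ⊗[k] H
  coassoc :
    (TensorProduct.map aut.symm.toLinearMap Hb.comul) ∘ₗ coact =
      (TensorProduct.assoc k N H H).toLinearMap ∘ₗ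
        (TensorProduct.map coact Hb.aut.symm.toLinearMap) ∘ₗ coact
  counit :
    (TensorProduct.rid k N).toLinearMap ∘ₗ (TensorProduct.map LinearMap.id Hb.counit) ∘ₗ coact =
      aut.symm.toLinearMap
  coact_aut :
    coact ∘ₗ aut.toLinearMap = (TensorProduct.map aut.toLinearMap Hb.aut.toLinearMap) ∘ₗ coact
  compat :
    coact ∘ₗ TensorProduct.lift act =
      (TensorProduct.map (TensorProduct.lift act) (TensorProduct.lift Hb.mul)) ∘ₗ
        (TensorProduct.tensorTensorTensorComm k A H N H).toLinearMap ∘ₗ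
          (TensorProduct.map Ac.coact coact)

/-- Coinvariants (as a set) of a coaction `coact` with structure automorphism `autM`. -/
def coinvSetOf {M : Type} [AddCommGroup M] [Module k M] (oneH : H)
    (coact : M →ₗ[k] M ⊗[k] H) (autM : M ≃ₗ[k] M) : Set M :=
  {m | coact m = autM.symm m ⊗ₜ[k] oneH}

/-- Coinvariants as a submodule. -/
def coinvSubmoduleOf {M : Type} [AddCommGroup M] [Module k M] (oneH : H)
    (coact : M →ₗ[k] M ⊗[k] H) (autM : M ≃ₗ[k] M) : Submodule k M :=
  LinearMap.ker (coact - ((TensorProduct.mk k M H).flip oneH) ∘ₗ autM.symm.toLinearMap)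

/-- The coinvariants `B = A^{co H}` of a Hom-comodule algebra. -/
def coinvA {Hb : MonoidalHomBialgebra k H} (Ac : HomComoduleAlgebra Hb A) : Set A :=
  coinvSetOf Hb.one Ac.coact Ac.aut

/-- The defining relations of the tensor product `M ⊗_B A` for a right `B`-Hom-module `M`. -/
def relSubR {M : Type} [AddCommGroup M] [Module k M]
    (mulA : A →ₗ[k] A →ₗ[k] A) (autA : A ≃ₗ[k] A) (Bset : Set A)
    (act : M →ₗ[k] A →ₗ[k] M) (autM : M ≃ₗ[k] M) : Submodule k (M ⊗[k] A) :=
  Submodule.span k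
    {x | ∃ m a b, b ∈ Bset ∧ x = act m b ⊗ₜ[k] autA a - autM m ⊗ₜ[k] mulA b a}

/-- The defining relations of the tensor product `A ⊗_B M` for a left `B`-Hom-module `M`. -/
def relSubL {M : Type} [AddCommGroup M] [Module k M]
    (mulA : A →ₗ[k] A →ₗ[k] A) (autA : A ≃ₗ[k] A) (Bset : Set A)
    (act : A →ₗ[k] M →ₗ[k] M) (autM : M ≃ₗ[k] M) : Submodule k (A ⊗[k] M) :=
  Submodule.span k
    {x | ∃ a m b, b ∈ Bset ∧ x = autA a ⊗ₜ[k] act b m - mulA a b ⊗ₜ[k] autM m}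

/-- The cotensor product `X □_H V` of a right Hom-comodule and a left Hom-comodule,
as a submodule of `X ⊗ V`. -/
def cotensorSub {X V : Type} [AddCommGroup X] [Module k X] [AddCommGroup V] [Module k V]
    (coactX : X →ₗ[k] X ⊗[k] H) (autX : X ≃ₗ[k] X)
    (coactV : V →ₗ[k] H ⊗[k] V) (autV : V ≃ₗ[k] V) : Submodule k (X ⊗[k] V) :=
  LinearMap.ker
    ((TensorProduct.map coactX autV.symm.toLinearMap) -
      ((TensorProduct.assoc k X H V).symm.toLinearMap ∘ₗ
        TensorProduct.map autX.symm.toLinearMap coactV))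

/-- The canonical Galois map at the level of `A ⊗ A`:
`a ⊗ b ↦ β⁻¹(a)·b₍₀₎ ⊗ α(b₍₁₎)`. -/
def canPreLin {Hb : MonoidalHomBialgebra k H} (Ac : HomComoduleAlgebra Hb A) :
    A ⊗[k] A →ₗ[k] A ⊗[k] H :=
  (TensorProduct.map (TensorProduct.lift Ac.mul) Hb.aut.toLinearMap) ∘ₗ
    (TensorProduct.assoc k A A H).symm.toLinearMap ∘ₗ
      (TensorProduct.map Ac.aut.symm.toLinearMap Ac.coact)

/-- The second canonical Galois map at the level of `A ⊗ A`:
`a ⊗ b ↦ a₍₀₎·β⁻¹(b) ⊗ α(a₍₁₎)`. -/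
def canPreLin' {Hb : MonoidalHomBialgebra k H} (Ac : HomComoduleAlgebra Hb A) :
    A ⊗[k] A →ₗ[k] A ⊗[k] H :=
  (TensorProduct.map (TensorProduct.lift Ac.mul) Hb.aut.toLinearMap) ∘ₗ
    (TensorProduct.assoc k A A H).symm.toLinearMap ∘ₗ
      (TensorProduct.map LinearMap.id (TensorProduct.comm k H A).toLinearMap) ∘ₗ
        (TensorProduct.assoc k A H A).toLinearMap ∘ₗ
          (TensorProduct.map Ac.coact Ac.aut.symm.toLinearMap)

/-- `φ : H → A` is a total integral. -/
def IsTotalIntegral {Hb : MonoidalHomBialgebra k H} (Ac : HomComoduleAlgebra Hb A)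
    (φ : H →ₗ[k] A) : Prop :=
  φ ∘ₗ Hb.aut.toLinearMap = Ac.aut.toLinearMap ∘ₗ φ ∧
    Ac.coact ∘ₗ φ = (TensorProduct.map φ LinearMap.id) ∘ₗ Hb.comul ∧
      φ Hb.one = Ac.one

/-- The Hom-comodule structure on `M ⊗ A` inducing that of `M ⊗_B A`:
`m ⊗ a ↦ (μ⁻¹(m) ⊗ a₍₀₎) ⊗ α(a₍₁₎)`. -/
def quotCoactPreR {Hb : MonoidalHomBialgebra k H} (Ac : HomComoduleAlgebra Hb A)
    {M : Type} [AddCommGroup M] [Module k M] (autM : M ≃ₗ[k] M) :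
    (M ⊗[k] A) →ₗ[k] (M ⊗[k] A) ⊗[k] H :=
  (TensorProduct.assoc k M A H).symm.toLinearMap ∘ₗ
    TensorProduct.map autM.symm.toLinearMap
      ((TensorProduct.map LinearMap.id Hb.aut.toLinearMap) ∘ₗ Ac.coact)

/-- The Hom-comodule structure on `A ⊗ M` inducing that of `A ⊗_B M`:
`a ⊗ m ↦ (a₍₀₎ ⊗ μ⁻¹(m)) ⊗ α(a₍₁₎)`. -/
def quotCoactPreL {Hb : MonoidalHomBialgebra k H} (Ac : HomComoduleAlgebra Hb A)
    {M : Type} [AddCommGroup M] [Module k M] (autM : M ≃ₗ[k] M) :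
    (A ⊗[k] M) →ₗ[k] (A ⊗[k] M) ⊗[k] H :=
  (TensorProduct.assoc k A M H).symm.toLinearMap ∘ₗ
    (TensorProduct.map LinearMap.id (TensorProduct.comm k H M).toLinearMap) ∘ₗ
      (TensorProduct.assoc k A H M).toLinearMap ∘ₗ
        TensorProduct.map
          ((TensorProduct.map LinearMap.id Hb.aut.toLinearMap) ∘ₗ Ac.coact)
          autM.symm.toLinearMap

/-- Bijectivity of the adjunction unit `η_M : M → (M ⊗_B A)^{co H}`, `m ↦ μ⁻¹(m) ⊗ 1_A`,
for a right `B`-Hom-module `M`.  Since the Hom-comodule structure of `M ⊗_B A` is the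
one induced from `M ⊗ A`, it is quantified over all maps `ρbar` (resp. `θ`) induced by
the comodule structure (resp. by `μ⁻¹ ⊗ β⁻¹`) on `M ⊗ A`. -/
def UnitBijectiveR {Hb : MonoidalHomBialgebra k H} (Ac : HomComoduleAlgebra Hb A)
    (Bset : Set A) {M : Type} [AddCommGroup M] [Module k M]
    (S : HomModuleOn Ac Bset M) : Prop :=
  ∀ (ρbar : ((M ⊗[k] A) ⧸ relSubR Ac.mul Ac.aut Bset S.act S.aut) →ₗ[k]
      ((M ⊗[k] A) ⧸ relSubR Ac.mul Ac.aut Bset S.act S.aut) ⊗[k] H)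
    (θ : ((M ⊗[k] A) ⧸ relSubR Ac.mul Ac.aut Bset S.act S.aut) →ₗ[k]
      ((M ⊗[k] A) ⧸ relSubR Ac.mul Ac.aut Bset S.act S.aut)),
    ρbar ∘ₗ (relSubR Ac.mul Ac.aut Bset S.act S.aut).mkQ =
      (TensorProduct.map (relSubR Ac.mul Ac.aut Bset S.act S.aut).mkQ LinearMap.id) ∘ₗ
        quotCoactPreR Ac S.aut →
    θ ∘ₗ (relSubR Ac.mul Ac.aut Bset S.act S.aut).mkQ =
      (relSubR Ac.mul Ac.aut Bset S.act S.aut).mkQ ∘ₗ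
        TensorProduct.map S.aut.symm.toLinearMap Ac.aut.symm.toLinearMap →
    ((∀ m : M, ρbar ((relSubR Ac.mul Ac.aut Bset S.act S.aut).mkQ (S.aut.symm m ⊗ₜ[k] Ac.one)) =
        θ ((relSubR Ac.mul Ac.aut Bset S.act S.aut).mkQ (S.aut.symm m ⊗ₜ[k] Ac.one)) ⊗ₜ[k] Hb.one) ∧
      Function.Injective
        (fun m : M => (relSubR Ac.mul Ac.aut Bset S.act S.aut).mkQ (S.aut.symm m ⊗ₜ[k] Ac.one)) ∧
      ∀ x, ρbar x = θ x ⊗ₜ[k] Hb.one →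
        ∃ m : M, (relSubR Ac.mul Ac.aut Bset S.act S.aut).mkQ (S.aut.symm m ⊗ₜ[k] Ac.one) = x)

/-- The relations of `N^{co H} ⊗_B A` for a right (H,A)-Hom-Hopf module `N`;
the closure of the coinvariants under the `B`-action and the automorphism is
encoded by existential membership. -/
def relCoinvR {Hb : MonoidalHomBialgebra k H} (Ac : HomComoduleAlgebra Hb A)
    (Bset : Set A) {N : Type} [AddCommGroup N] [Module k N]
    (P : HomHopfModule Ac N) :
    Submodule k ((coinvSubmoduleOf Hb.one P.coact P.aut : Submodule k N) ⊗[k] A) :=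
  Submodule.span k
    {x | ∃ (n n' n'' : coinvSubmoduleOf Hb.one P.coact P.aut) (a b : A), b ∈ Bset ∧
      (n' : N) = P.act n b ∧ (n'' : N) = P.aut n ∧
      x = n' ⊗ₜ[k] Ac.aut a - n'' ⊗ₜ[k] Ac.mul b a}

/-- The counit of the adjunction at the level of `N^{co H} ⊗ A`: `n ⊗ a ↦ n · a`. -/
def counitPre {Hb : MonoidalHomBialgebra k H} (Ac : HomComoduleAlgebra Hb A)
    {N : Type} [AddCommGroup N] [Module k N] (P : HomHopfModule Ac N) :
    ((coinvSubmoduleOf Hb.one P.coact P.aut : Submodule k N) ⊗[k] A) →ₗ[k] N :=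
  TensorProduct.lift (P.act ∘ₗ (coinvSubmoduleOf Hb.one P.coact P.aut).subtype)

/-- Bijectivity of the adjunction counit `ε_N : N^{co H} ⊗_B A → N`, `n ⊗ a ↦ n·a`:
equivalently, the lift `N^{co H} ⊗ A → N` is surjective and its kernel is exactly
the defining relations of `⊗_B`. -/
def CounitBijectiveR {Hb : MonoidalHomBialgebra k H} (Ac : HomComoduleAlgebra Hb A)
    (Bset : Set A) {N : Type} [AddCommGroup N] [Module k N]
    (P : HomHopfModule Ac N) : Prop :=
  Function.Surjective (counitPre Ac P) ∧ LinearMap.ker (counitPre Ac P) = relCoinvR Ac Bset P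

/-- Bijectivity of the adjunction unit `η'_M : M → (A ⊗_B M)^{co H}`, `m ↦ 1_A ⊗ μ⁻¹(m)`,
for a left `B`-Hom-module `M`. -/
def UnitBijectiveL {Hb : MonoidalHomBialgebra k H} (Ac : HomComoduleAlgebra Hb A)
    (Bset : Set A) {M : Type} [AddCommGroup M] [Module k M]
    (S : HomLeftModuleOn Ac Bset M) : Prop :=
  ∀ (ρbar : ((A ⊗[k] M) ⧸ relSubL Ac.mul Ac.aut Bset S.act S.aut) →ₗ[k]
      ((A ⊗[k] M) ⧸ relSubL Ac.mul Ac.aut Bset S.act S.aut) ⊗[k] H)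
    (θ : ((A ⊗[k] M) ⧸ relSubL Ac.mul Ac.aut Bset S.act S.aut) →ₗ[k]
      ((A ⊗[k] M) ⧸ relSubL Ac.mul Ac.aut Bset S.act S.aut)),
    ρbar ∘ₗ (relSubL Ac.mul Ac.aut Bset S.act S.aut).mkQ =
      (TensorProduct.map (relSubL Ac.mul Ac.aut Bset S.act S.aut).mkQ LinearMap.id) ∘ₗ
        quotCoactPreL Ac S.aut →
    θ ∘ₗ (relSubL Ac.mul Ac.aut Bset S.act S.aut).mkQ =
      (relSubL Ac.mul Ac.aut Bset S.act S.aut).mkQ ∘ₗ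
        TensorProduct.map Ac.aut.symm.toLinearMap S.aut.symm.toLinearMap →
    ((∀ m : M, ρbar ((relSubL Ac.mul Ac.aut Bset S.act S.aut).mkQ (Ac.one ⊗ₜ[k] S.aut.symm m)) =
        θ ((relSubL Ac.mul Ac.aut Bset S.act S.aut).mkQ (Ac.one ⊗ₜ[k] S.aut.symm m)) ⊗ₜ[k] Hb.one) ∧
      Function.Injective
        (fun m : M => (relSubL Ac.mul Ac.aut Bset S.act S.aut).mkQ (Ac.one ⊗ₜ[k] S.aut.symm m)) ∧
      ∀ x, ρbar x = θ x ⊗ₜ[k] Hb.one →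
        ∃ m : M, (relSubL Ac.mul Ac.aut Bset S.act S.aut).mkQ (Ac.one ⊗ₜ[k] S.aut.symm m) = x)

/-- The relations of `A ⊗_B N^{co H}` for a left-right (H,A)-Hom-Hopf module `N`. -/
def relCoinvL {Hb : MonoidalHomBialgebra k H} (Ac : HomComoduleAlgebra Hb A)
    (Bset : Set A) {N : Type} [AddCommGroup N] [Module k N]
    (P : LRHomHopfModule Ac N) :
    Submodule k (A ⊗[k] (coinvSubmoduleOf Hb.one P.coact P.aut : Submodule k N)) :=
  Submodule.span k
    {x | ∃ (n n' n'' : coinvSubmoduleOf Hb.one P.coact P.aut) (a b : A), b ∈ Bset ∧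
      (n' : N) = P.act b n ∧ (n'' : N) = P.aut n ∧
      x = Ac.aut a ⊗ₜ[k] n' - Ac.mul a b ⊗ₜ[k] n''}

/-- The counit at the level of `A ⊗ N^{co H}`: `a ⊗ n ↦ a · n`. -/
def counitPreL {Hb : MonoidalHomBialgebra k H} (Ac : HomComoduleAlgebra Hb A)
    {N : Type} [AddCommGroup N] [Module k N] (P : LRHomHopfModule Ac N) :
    (A ⊗[k] (coinvSubmoduleOf Hb.one P.coact P.aut : Submodule k N)) →ₗ[k] N :=
  TensorProduct.lift (P.act.compl₂ (coinvSubmoduleOf Hb.one P.coact P.aut).subtype)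

/-- Bijectivity of the counit `ε'_N : A ⊗_B N^{co H} → N`. -/
def CounitBijectiveL {Hb : MonoidalHomBialgebra k H} (Ac : HomComoduleAlgebra Hb A)
    (Bset : Set A) {N : Type} [AddCommGroup N] [Module k N]
    (P : LRHomHopfModule Ac N) : Prop :=
  Function.Surjective (counitPreL Ac P) ∧ LinearMap.ker (counitPreL Ac P) = relCoinvL Ac Bset P

/-- A morphism of right `B`-Hom-modules. -/
def IsHomModuleOnHomR {Hb : MonoidalHomBialgebra k H} (Ac : HomComoduleAlgebra Hb A)
    (Bset : Set A) {M₁ M₂ : Type} [AddCommGroup M₁] [Module k M₁] [AddCommGroup M₂] [Module k M₂]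
    (S₁ : HomModuleOn Ac Bset M₁) (S₂ : HomModuleOn Ac Bset M₂) (f : M₁ →ₗ[k] M₂) : Prop :=
  (∀ m, ∀ b ∈ Bset, f (S₁.act m b) = S₂.act (f m) b) ∧ ∀ m, f (S₁.aut m) = S₂.aut (f m)

/-- A morphism of left `B`-Hom-modules. -/
def IsHomModuleOnHomL {Hb : MonoidalHomBialgebra k H} (Ac : HomComoduleAlgebra Hb A)
    (Bset : Set A) {M₁ M₂ : Type} [AddCommGroup M₁] [Module k M₁] [AddCommGroup M₂] [Module k M₂]
    (S₁ : HomLeftModuleOn Ac Bset M₁) (S₂ : HomLeftModuleOn Ac Bset M₂) (f : M₁ →ₗ[k] M₂) : Prop :=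
  (∀ m, ∀ b ∈ Bset, f (S₁.act b m) = S₂.act b (f m)) ∧ ∀ m, f (S₁.aut m) = S₂.aut (f m)

/-- `A` is faithfully flat as a left `B`-Hom-module: the induced functor `− ⊗_B A`
on right `B`-Hom-modules preserves and reflects exactness. -/
def FaithfullyFlatLeftOf {Hb : MonoidalHomBialgebra k H} (Ac : HomComoduleAlgebra Hb A)
    (Bset : Set A) : Prop :=
  ∀ (M₁ M₂ M₃ : Type) [AddCommGroup M₁] [Module k M₁] [AddCommGroup M₂] [Module k M₂]
    [AddCommGroup M₃] [Module k M₃]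
    (S₁ : HomModuleOn Ac Bset M₁) (S₂ : HomModuleOn Ac Bset M₂) (S₃ : HomModuleOn Ac Bset M₃)
    (f : M₁ →ₗ[k] M₂) (g : M₂ →ₗ[k] M₃),
    IsHomModuleOnHomR Ac Bset S₁ S₂ f → IsHomModuleOnHomR Ac Bset S₂ S₃ g →
    ∀ (fbar : ((M₁ ⊗[k] A) ⧸ relSubR Ac.mul Ac.aut Bset S₁.act S₁.aut) →ₗ[k]
        ((M₂ ⊗[k] A) ⧸ relSubR Ac.mul Ac.aut Bset S₂.act S₂.aut))
      (gbar : ((M₂ ⊗[k] A) ⧸ relSubR Ac.mul Ac.aut Bset S₂.act S₂.aut) →ₗ[k]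
        ((M₃ ⊗[k] A) ⧸ relSubR Ac.mul Ac.aut Bset S₃.act S₃.aut)),
      fbar ∘ₗ (relSubR Ac.mul Ac.aut Bset S₁.act S₁.aut).mkQ =
        (relSubR Ac.mul Ac.aut Bset S₂.act S₂.aut).mkQ ∘ₗ TensorProduct.map f LinearMap.id →
      gbar ∘ₗ (relSubR Ac.mul Ac.aut Bset S₂.act S₂.aut).mkQ =
        (relSubR Ac.mul Ac.aut Bset S₃.act S₃.aut).mkQ ∘ₗ TensorProduct.map g LinearMap.id →
      (LinearMap.range f = LinearMap.ker g ↔ LinearMap.range fbar = LinearMap.ker gbar)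

/-- `A` is faithfully flat as a right `B`-Hom-module: the induced functor `A ⊗_B −`
on left `B`-Hom-modules preserves and reflects exactness. -/
def FaithfullyFlatRightOf {Hb : MonoidalHomBialgebra k H} (Ac : HomComoduleAlgebra Hb A)
    (Bset : Set A) : Prop :=
  ∀ (M₁ M₂ M₃ : Type) [AddCommGroup M₁] [Module k M₁] [AddCommGroup M₂] [Module k M₂]
    [AddCommGroup M₃] [Module k M₃]
    (S₁ : HomLeftModuleOn Ac Bset M₁) (S₂ : HomLeftModuleOn Ac Bset M₂)
    (S₃ : HomLeftModuleOn Ac Bset M₃)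
    (f : M₁ →ₗ[k] M₂) (g : M₂ →ₗ[k] M₃),
    IsHomModuleOnHomL Ac Bset S₁ S₂ f → IsHomModuleOnHomL Ac Bset S₂ S₃ g →
    ∀ (fbar : ((A ⊗[k] M₁) ⧸ relSubL Ac.mul Ac.aut Bset S₁.act S₁.aut) →ₗ[k]
        ((A ⊗[k] M₂) ⧸ relSubL Ac.mul Ac.aut Bset S₂.act S₂.aut))
      (gbar : ((A ⊗[k] M₂) ⧸ relSubL Ac.mul Ac.aut Bset S₂.act S₂.aut) →ₗ[k]
        ((A ⊗[k] M₃) ⧸ relSubL Ac.mul Ac.aut Bset S₃.act S₃.aut)),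
      fbar ∘ₗ (relSubL Ac.mul Ac.aut Bset S₁.act S₁.aut).mkQ =
        (relSubL Ac.mul Ac.aut Bset S₂.act S₂.aut).mkQ ∘ₗ TensorProduct.map LinearMap.id f →
      gbar ∘ₗ (relSubL Ac.mul Ac.aut Bset S₂.act S₂.aut).mkQ =
        (relSubL Ac.mul Ac.aut Bset S₃.act S₃.aut).mkQ ∘ₗ TensorProduct.map LinearMap.id g →
      (LinearMap.range f = LinearMap.ker g ↔ LinearMap.range fbar = LinearMap.ker gbar)

/-- `A` is flat as a left `B`-Hom-module: `− ⊗_B A` preserves exactness. -/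
def FlatLeftOf {Hb : MonoidalHomBialgebra k H} (Ac : HomComoduleAlgebra Hb A)
    (Bset : Set A) : Prop :=
  ∀ (M₁ M₂ M₃ : Type) [AddCommGroup M₁] [Module k M₁] [AddCommGroup M₂] [Module k M₂]
    [AddCommGroup M₃] [Module k M₃]
    (S₁ : HomModuleOn Ac Bset M₁) (S₂ : HomModuleOn Ac Bset M₂) (S₃ : HomModuleOn Ac Bset M₃)
    (f : M₁ →ₗ[k] M₂) (g : M₂ →ₗ[k] M₃),
    IsHomModuleOnHomR Ac Bset S₁ S₂ f → IsHomModuleOnHomR Ac Bset S₂ S₃ g →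
    ∀ (fbar : ((M₁ ⊗[k] A) ⧸ relSubR Ac.mul Ac.aut Bset S₁.act S₁.aut) →ₗ[k]
        ((M₂ ⊗[k] A) ⧸ relSubR Ac.mul Ac.aut Bset S₂.act S₂.aut))
      (gbar : ((M₂ ⊗[k] A) ⧸ relSubR Ac.mul Ac.aut Bset S₂.act S₂.aut) →ₗ[k]
        ((M₃ ⊗[k] A) ⧸ relSubR Ac.mul Ac.aut Bset S₃.act S₃.aut)),
      fbar ∘ₗ (relSubR Ac.mul Ac.aut Bset S₁.act S₁.aut).mkQ =
        (relSubR Ac.mul Ac.aut Bset S₂.act S₂.aut).mkQ ∘ₗ TensorProduct.map f LinearMap.id →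
      gbar ∘ₗ (relSubR Ac.mul Ac.aut Bset S₂.act S₂.aut).mkQ =
        (relSubR Ac.mul Ac.aut Bset S₃.act S₃.aut).mkQ ∘ₗ TensorProduct.map g LinearMap.id →
      (LinearMap.range f = LinearMap.ker g → LinearMap.range fbar = LinearMap.ker gbar)

end

/-! STATEMENT 0: Twisting an ordinary bialgebra by a bialgebra automorphism
yields a monoidal Hom-bialgebra `H_α`. -/
theorem statement0
    (k : Type) [Field k] (H : Type) [AddCommGroup H] [Module k H]
    (mul : H →ₗ[k] H →ₗ[k] H) (one : H)
    (comul : H →ₗ[k] H ⊗[k] H) (counit : H →ₗ[k] k)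
    -- ordinary (associative, unital) algebra axioms
    (hassoc : ∀ a b c, mul (mul a b) c = mul a (mul b c))
    (hmul_one : ∀ a, mul a one = a) (hone_mul : ∀ a, mul one a = a)
    -- ordinary (coassociative, counital) coalgebra axioms
    (hcoassoc :
      (TensorProduct.assoc k H H H).toLinearMap ∘ₗ
          (TensorProduct.map comul LinearMap.id) ∘ₗ comul =
        (TensorProduct.map LinearMap.id comul) ∘ₗ comul)
    (hcounit_left :
      (TensorProduct.lid k H).toLinearMap ∘ₗ (TensorProduct.map counit LinearMap.id) ∘ₗ comul =
        LinearMap.id)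
    (hcounit_right :
      (TensorProduct.rid k H).toLinearMap ∘ₗ (TensorProduct.map LinearMap.id counit) ∘ₗ comul =
        LinearMap.id)
    -- bialgebra axioms: Δ and ε are algebra maps
    (hcomul_mul :
      comul ∘ₗ TensorProduct.lift mul =
        (TensorProduct.map (TensorProduct.lift mul) (TensorProduct.lift mul)) ∘ₗ
          (TensorProduct.tensorTensorTensorComm k H H H H).toLinearMap ∘ₗ
            (TensorProduct.map comul comul))
    (hcomul_one : comul one = one ⊗ₜ[k] one)
    (hcounit_mul : ∀ a b, counit (mul a b) = counit a * counit b)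
    (hcounit_one : counit one = 1)
    -- α is a bialgebra automorphism
    (α : H ≃ₗ[k] H)
    (hα_mul : ∀ a b, α (mul a b) = mul (α a) (α b))
    (hα_one : α one = one)
    (hα_comul : comul ∘ₗ α.toLinearMap = (TensorProduct.map α.toLinearMap α.toLinearMap) ∘ₗ comul)
    (hα_counit : counit ∘ₗ α.toLinearMap = counit) :
    ∃ Hb : MonoidalHomBialgebra k H,
      (∀ a b, Hb.mul a b = α (mul a b)) ∧
      Hb.one = one ∧
      Hb.comul = comul ∘ₗ α.symm.toLinearMap ∧
      Hb.counit = counit ∧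
      Hb.aut = α := by
  have hαs : ∀ x, α.toLinearMap (α.symm.toLinearMap x) = x := fun x => α.apply_symm_apply x
  have hsα : ∀ x, α.symm.toLinearMap (α.toLinearMap x) = x := fun x => α.symm_apply_apply x
  have hcompαs : α.toLinearMap ∘ₗ α.symm.toLinearMap = LinearMap.id := LinearMap.ext hαs
  have hcompsα : α.symm.toLinearMap ∘ₗ α.toLinearMap = LinearMap.id := LinearMap.ext hsα
  -- the inverse of `α` is also comultiplicative
  have hs : (TensorProduct.map α.symm.toLinearMap α.symm.toLinearMap) ∘ₗ comul =
      comul ∘ₗ α.symm.toLinearMap := by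
    have h1 : comul = ((TensorProduct.map α.toLinearMap α.toLinearMap) ∘ₗ comul) ∘ₗ
        α.symm.toLinearMap := by
      rw [← hα_comul, LinearMap.comp_assoc, hcompαs, LinearMap.comp_id]
    conv_lhs => rw [h1]
    rw [← LinearMap.comp_assoc, ← LinearMap.comp_assoc, ← TensorProduct.map_comp, hcompsα,
      TensorProduct.map_id, LinearMap.id_comp]
  have hsone : α.symm one = one := by
    rw [LinearEquiv.symm_apply_eq, hα_one]
  have hcα : ∀ x, counit (α x) = counit x := fun x => LinearMap.congr_fun hα_counit x
  have hlift : TensorProduct.lift (mul.compr₂ α.toLinearMap) =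
      α.toLinearMap ∘ₗ TensorProduct.lift mul := by
    ext a b
    simp
  have hliftα : TensorProduct.lift mul ∘ₗ TensorProduct.map α.symm.toLinearMap
      α.symm.toLinearMap = α.symm.toLinearMap ∘ₗ TensorProduct.lift mul := by
    ext a b
    apply α.injective
    simp [hα_mul]
  refine ⟨{ mul := mul.compr₂ α.toLinearMap
            one := one
            comul := comul ∘ₗ α.symm.toLinearMap
            counit := counit
            aut := α
            hom_assoc := ?_
            mulOne := ?_
            oneMul := ?_
            aut_mul := ?_
            aut_one := hα_one
            coassoc := ?_
            counit_left := ?_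
            counit_right := ?_
            comul_aut := ?_
            counit_aut := hα_counit
            comul_mul := ?_
            comul_one := ?_
            counit_mul := ?_
            counit_one := hcounit_one }, ?_, rfl, rfl, rfl, rfl⟩
  · intro a b c
    simp [hα_mul, hassoc]
  · intro a
    simp [hmul_one]
  · intro a
    simp [hone_mul]
  · intro a b
    simp [hα_mul]
  · have e1 : TensorProduct.map (comul ∘ₗ α.symm.toLinearMap) α.symm.toLinearMap =
        TensorProduct.map comul LinearMap.id ∘ₗ
          TensorProduct.map α.symm.toLinearMap α.symm.toLinearMap := by
      rw [← TensorProduct.map_comp, LinearMap.id_comp]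
    have e2 : TensorProduct.map α.symm.toLinearMap (comul ∘ₗ α.symm.toLinearMap) =
        TensorProduct.map LinearMap.id comul ∘ₗ
          TensorProduct.map α.symm.toLinearMap α.symm.toLinearMap := by
      rw [← TensorProduct.map_comp, LinearMap.id_comp]
    rw [e1, e2]
    ext x
    have h1 := fun y => LinearMap.congr_fun hs y
    have h2 := fun y => LinearMap.congr_fun hcoassoc y
    simp only [LinearMap.comp_apply] at h1 h2 ⊢
    rw [h1, h2]
  · exact LinearMap.ext fun x => LinearMap.congr_fun hcounit_left (α.symm x)
  · exact LinearMap.ext fun x => LinearMap.congr_fun hcounit_right (α.symm x)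
  · rw [← LinearMap.comp_assoc, ← hα_comul, LinearMap.comp_assoc, LinearMap.comp_assoc,
      hcompαs, hcompsα]
  · rw [hlift, TensorProduct.map_comp, TensorProduct.map_comp]
    apply LinearMap.ext
    intro x
    have h1 := fun y => LinearMap.congr_fun hcomul_mul y
    have h2 := fun y => LinearMap.congr_fun hα_comul y
    have h3 := fun y => LinearMap.congr_fun hliftα y
    simp only [LinearMap.comp_apply] at h1 h2 h3 ⊢
    rw [hsα, ← h1, h3, ← h2, hαs]
  · change comul (α.symm one) = _
    rw [hsone, hcomul_one]
  · intro a b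
    change counit (α (mul a b)) = _
    rw [hcα, hcounit_mul]
  · intro a b
    rfl
end

section
/- Let H be a bialgebra over a field k, α: H → H a bialgebra automorphism, and (A, m_A, ρ) a right H-comodule algebra (so ρ:A→A⊗H is a coassociative counital coaction that is an algebra map). Let β: A → A be an algebra automorphism satisfying ρ∘β = (β⊗α)∘ρ. Then A_β = (A, β, m_β, ρ_β), where m_β(a⊗b)=β(ab) and ρ_β = ρ∘β⁻¹, is a right (H_α, α)-Hom-comodule algebra over the monoidal Hom-bialgebra H_α = (H, α, α∘m, η, Δ∘α⁻¹, ε): (A, β, m_β) is a monoidal Hom-algebra, (A, β, ρ_β) is a right (H_α,α)-Hom-comodule, and ρ_β(m_β(a⊗b)) = ρ_β(a)ρ_β(b) (product taken in A_β ⊗ H_α) with ρ_β(1_A)=1_A⊗1_H. -/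
open TensorProduct

section Helpers

variable {k : Type} [Field k] {H : Type} [AddCommGroup H] [Module k H]
  {A : Type} [AddCommGroup A] [Module k A]

theorem twist_symm (ρ : A →ₗ[k] A ⊗[k] H) (β : A ≃ₗ[k] A) (α : H ≃ₗ[k] H)
    (h : ρ ∘ₗ β.toLinearMap = (TensorProduct.map β.toLinearMap α.toLinearMap) ∘ₗ ρ) :
    (TensorProduct.map β.symm.toLinearMap α.symm.toLinearMap) ∘ₗ ρ =
      ρ ∘ₗ β.symm.toLinearMap := by
  ext a
  have h1 := LinearMap.congr_fun h (β.symm a)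
  simp only [LinearMap.comp_apply, LinearEquiv.coe_coe, LinearEquiv.apply_symm_apply] at h1 ⊢
  rw [h1, ← LinearMap.comp_apply, ← TensorProduct.map_comp]
  simp

theorem twist_coassoc (ρ : A →ₗ[k] A ⊗[k] H) (comul : H →ₗ[k] H ⊗[k] H)
    (β : A ≃ₗ[k] A) (α : H ≃ₗ[k] H)
    (h : ρ ∘ₗ β.toLinearMap = (TensorProduct.map β.toLinearMap α.toLinearMap) ∘ₗ ρ)
    (hc : (TensorProduct.map LinearMap.id comul) ∘ₗ ρ =
        (TensorProduct.assoc k A H H).toLinearMap ∘ₗ (TensorProduct.map ρ LinearMap.id) ∘ₗ ρ) :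
    (TensorProduct.map β.symm.toLinearMap (comul ∘ₗ α.symm.toLinearMap)) ∘ₗ
        (ρ ∘ₗ β.symm.toLinearMap) =
      (TensorProduct.assoc k A H H).toLinearMap ∘ₗ
        (TensorProduct.map (ρ ∘ₗ β.symm.toLinearMap) α.symm.toLinearMap) ∘ₗ
          (ρ ∘ₗ β.symm.toLinearMap) := by
  have hs := twist_symm ρ β α h
  have e1 : TensorProduct.map β.symm.toLinearMap (comul ∘ₗ α.symm.toLinearMap) =
      TensorProduct.map LinearMap.id comul ∘ₗ
        TensorProduct.map β.symm.toLinearMap α.symm.toLinearMap := by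
    rw [← TensorProduct.map_comp, LinearMap.id_comp]
  have e2 : TensorProduct.map (ρ ∘ₗ β.symm.toLinearMap) α.symm.toLinearMap =
      TensorProduct.map ρ LinearMap.id ∘ₗ
        TensorProduct.map β.symm.toLinearMap α.symm.toLinearMap := by
    rw [← TensorProduct.map_comp, LinearMap.id_comp]
  rw [e1, e2]
  ext a
  have h1 := LinearMap.congr_fun hs (β.symm a)
  have h2 := LinearMap.congr_fun hc (β.symm (β.symm a))
  simp only [LinearMap.comp_apply] at h1 h2 ⊢
  simp only [LinearEquiv.coe_coe] at h1 h2 ⊢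
  rw [h1, h2]

theorem twist_aut (ρ : A →ₗ[k] A ⊗[k] H) (β : A ≃ₗ[k] A) (α : H ≃ₗ[k] H)
    (h : ρ ∘ₗ β.toLinearMap = (TensorProduct.map β.toLinearMap α.toLinearMap) ∘ₗ ρ) :
    (ρ ∘ₗ β.symm.toLinearMap) ∘ₗ β.toLinearMap =
      (TensorProduct.map β.toLinearMap α.toLinearMap) ∘ₗ (ρ ∘ₗ β.symm.toLinearMap) := by
  rw [← LinearMap.comp_assoc, ← h]
  ext a
  simp

theorem twist_mul (ρ : A →ₗ[k] A ⊗[k] H) (β : A ≃ₗ[k] A) (α : H ≃ₗ[k] H)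
    (mul : H →ₗ[k] H →ₗ[k] H) (mulA : A →ₗ[k] A →ₗ[k] A)
    (h : ρ ∘ₗ β.toLinearMap = (TensorProduct.map β.toLinearMap α.toLinearMap) ∘ₗ ρ)
    (hβ_mul : ∀ a b, β (mulA a b) = mulA (β a) (β b))
    (hρ_mul :
      ρ ∘ₗ TensorProduct.lift mulA =
        (TensorProduct.map (TensorProduct.lift mulA) (TensorProduct.lift mul)) ∘ₗ
          (TensorProduct.tensorTensorTensorComm k A H A H).toLinearMap ∘ₗ
            (TensorProduct.map ρ ρ)) :
    (ρ ∘ₗ β.symm.toLinearMap) ∘ₗ TensorProduct.lift (mulA.compr₂ β.toLinearMap) =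
      (TensorProduct.map (TensorProduct.lift (mulA.compr₂ β.toLinearMap))
          (TensorProduct.lift (mul.compr₂ α.toLinearMap))) ∘ₗ
        (TensorProduct.tensorTensorTensorComm k A H A H).toLinearMap ∘ₗ
          (TensorProduct.map (ρ ∘ₗ β.symm.toLinearMap) (ρ ∘ₗ β.symm.toLinearMap)) := by
  rw [TensorProduct.lift_compr₂, TensorProduct.lift_compr₂, TensorProduct.map_comp,
    TensorProduct.map_comp]
  apply TensorProduct.ext'
  intro a b
  have h2 := LinearMap.congr_fun hρ_mul (β.symm a ⊗ₜ[k] β.symm b)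
  have h3 := LinearMap.congr_fun h (mulA (β.symm a) (β.symm b))
  simp only [LinearMap.comp_apply, TensorProduct.map_tmul, TensorProduct.lift.tmul,
    LinearEquiv.coe_coe, LinearEquiv.symm_apply_apply] at h2 h3 ⊢
  rw [← h2, ← h3, hβ_mul]
  simp

end Helpers

/-! STATEMENT 1: Twisting an ordinary right H-comodule algebra `A` by a compatible
algebra automorphism `β` yields a right `(H_α, α)`-Hom-comodule algebra `A_β`. -/
theorem statement1
    (k : Type) [Field k] (H : Type) [AddCommGroup H] [Module k H]
    (mul : H →ₗ[k] H →ₗ[k] H) (one : H)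
    (comul : H →ₗ[k] H ⊗[k] H) (counit : H →ₗ[k] k)
    (hassoc : ∀ a b c, mul (mul a b) c = mul a (mul b c))
    (hmul_one : ∀ a, mul a one = a) (hone_mul : ∀ a, mul one a = a)
    (hcoassoc :
      (TensorProduct.assoc k H H H).toLinearMap ∘ₗ
          (TensorProduct.map comul LinearMap.id) ∘ₗ comul =
        (TensorProduct.map LinearMap.id comul) ∘ₗ comul)
    (hcounit_left :
      (TensorProduct.lid k H).toLinearMap ∘ₗ (TensorProduct.map counit LinearMap.id) ∘ₗ comul =
        LinearMap.id)
    (hcounit_right :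
      (TensorProduct.rid k H).toLinearMap ∘ₗ (TensorProduct.map LinearMap.id counit) ∘ₗ comul =
        LinearMap.id)
    (hcomul_mul :
      comul ∘ₗ TensorProduct.lift mul =
        (TensorProduct.map (TensorProduct.lift mul) (TensorProduct.lift mul)) ∘ₗ
          (TensorProduct.tensorTensorTensorComm k H H H H).toLinearMap ∘ₗ
            (TensorProduct.map comul comul))
    (hcomul_one : comul one = one ⊗ₜ[k] one)
    (hcounit_mul : ∀ a b, counit (mul a b) = counit a * counit b)
    (hcounit_one : counit one = 1)
    -- α is a bialgebra automorphism of H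
    (α : H ≃ₗ[k] H)
    (hα_mul : ∀ a b, α (mul a b) = mul (α a) (α b))
    (hα_one : α one = one)
    (hα_comul : comul ∘ₗ α.toLinearMap = (TensorProduct.map α.toLinearMap α.toLinearMap) ∘ₗ comul)
    (hα_counit : counit ∘ₗ α.toLinearMap = counit)
    -- A is an ordinary right H-comodule algebra
    (A : Type) [AddCommGroup A] [Module k A]
    (mulA : A →ₗ[k] A →ₗ[k] A) (oneA : A)
    (hassocA : ∀ a b c, mulA (mulA a b) c = mulA a (mulA b c))
    (hmul_oneA : ∀ a, mulA a oneA = a) (hone_mulA : ∀ a, mulA oneA a = a)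
    (ρ : A →ₗ[k] A ⊗[k] H)
    (hρ_coassoc :
      (TensorProduct.map LinearMap.id comul) ∘ₗ ρ =
        (TensorProduct.assoc k A H H).toLinearMap ∘ₗ (TensorProduct.map ρ LinearMap.id) ∘ₗ ρ)
    (hρ_counit :
      (TensorProduct.rid k A).toLinearMap ∘ₗ (TensorProduct.map LinearMap.id counit) ∘ₗ ρ =
        LinearMap.id)
    (hρ_mul :
      ρ ∘ₗ TensorProduct.lift mulA =
        (TensorProduct.map (TensorProduct.lift mulA) (TensorProduct.lift mul)) ∘ₗ
          (TensorProduct.tensorTensorTensorComm k A H A H).toLinearMap ∘ₗ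
            (TensorProduct.map ρ ρ))
    (hρ_one : ρ oneA = oneA ⊗ₜ[k] one)
    -- β is an algebra automorphism of A compatible with the coaction
    (β : A ≃ₗ[k] A)
    (hβ_mul : ∀ a b, β (mulA a b) = mulA (β a) (β b))
    (hβ_one : β oneA = oneA)
    (hρβ : ρ ∘ₗ β.toLinearMap = (TensorProduct.map β.toLinearMap α.toLinearMap) ∘ₗ ρ) :
    ∃ Hb : MonoidalHomBialgebra k H,
      ((∀ a b, Hb.mul a b = α (mul a b)) ∧
        Hb.one = one ∧
        Hb.comul = comul ∘ₗ α.symm.toLinearMap ∧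
        Hb.counit = counit ∧
        Hb.aut = α) ∧
      ∃ Ac : HomComoduleAlgebra Hb A,
        (∀ a b, Ac.mul a b = β (mulA a b)) ∧
        Ac.one = oneA ∧
        Ac.aut = β ∧
        Ac.coact = ρ ∘ₗ β.symm.toLinearMap := by
  have symm_one : α.symm one = one := by rw [LinearEquiv.symm_apply_eq, hα_one]
  have symm_oneA : β.symm oneA = oneA := by rw [LinearEquiv.symm_apply_eq, hβ_one]
  have hce : ∀ a, counit (α a) = counit a := fun a => LinearMap.congr_fun hα_counit a
  refine ⟨
    { mul := mul.compr₂ α.toLinearMap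
      one := one
      comul := comul ∘ₗ α.symm.toLinearMap
      counit := counit
      aut := α
      hom_assoc := fun a b c => by
        simp only [LinearMap.compr₂_apply, LinearEquiv.coe_coe, hα_mul, hassoc]
      mulOne := fun a => by simp [hmul_one]
      oneMul := fun a => by simp [hone_mul]
      aut_mul := fun a b => by simp [hα_mul]
      aut_one := hα_one
      coassoc := (twist_coassoc comul comul α α hα_comul hcoassoc.symm).symm
      counit_left := by
        ext a
        exact LinearMap.congr_fun hcounit_left (α.symm a)
      counit_right := by
        ext a
        exact LinearMap.congr_fun hcounit_right (α.symm a)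
      comul_aut := twist_aut comul α α hα_comul
      counit_aut := hα_counit
      comul_mul := twist_mul comul α α mul mul hα_comul hα_mul hcomul_mul
      comul_one := by simp [symm_one, hcomul_one]
      counit_mul := fun a b => by simp [hce, hcounit_mul]
      counit_one := hcounit_one }, ⟨fun _ _ => rfl, rfl, rfl, rfl, rfl⟩,
    { mul := mulA.compr₂ β.toLinearMap
      one := oneA
      aut := β
      hom_assoc := fun a b c => by
        simp only [LinearMap.compr₂_apply, LinearEquiv.coe_coe, hβ_mul, hassocA]
      mulOne := fun a => by simp [hmul_oneA]
      oneMul := fun a => by simp [hone_mulA]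
      aut_mul := fun a b => by simp [hβ_mul]
      aut_one := hβ_one
      coact := ρ ∘ₗ β.symm.toLinearMap
      coassoc := twist_coassoc ρ comul β α hρβ hρ_coassoc
      counit := by
        ext a
        exact LinearMap.congr_fun hρ_counit (β.symm a)
      coact_aut := twist_aut ρ β α hρβ
      coact_mul := twist_mul ρ β α mul mulA hρβ hβ_mul hρ_mul
      coact_one := by simp [symm_oneA, hρ_one] }, fun _ _ => rfl, rfl, rfl, rfl⟩
end

section
/- Let (H,α) be a monoidal Hom-Hopf algebra, (A,β) a right (H,α)-Hom-comodule algebra, and (M,μ) a right (A,β)-Hom-module. Then (M⊗H, μ⊗α), equipped with the action (m⊗h)·a = m·a₍₀₎ ⊗ h a₍₁₎ and the coaction ρ(m⊗h) = (μ⁻¹(m)⊗h₁)⊗α(h₂), is a right (H,A)-Hom-Hopf module; in particular the compatibility condition ρ((m⊗h)·a) = (m⊗h)₍₀₎·a₍₀₎ ⊗ (m⊗h)₍₁₎ a₍₁₎ holds for all m∈M, h∈H, a∈A. -/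
open TensorProduct

section Helpers
open TensorProduct

variable {k : Type} [Field k] {H : Type} [AddCommGroup H] [Module k H]
  {A : Type} [AddCommGroup A] [Module k A] {M : Type} [AddCommGroup M] [Module k M]

/-- The action on `M ⊗ H`. -/
noncomputable def s3act {Hb : MonoidalHomBialgebra k H} (Ac : HomComoduleAlgebra Hb A)
    (Mm : HomModule Ac M) : (M ⊗[k] H) →ₗ[k] A →ₗ[k] (M ⊗[k] H) :=
  ((TensorProduct.mk k (M ⊗[k] H) (A ⊗[k] H)).compr₂
    ((TensorProduct.map (TensorProduct.lift Mm.act) (TensorProduct.lift Hb.mul)) ∘ₗ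
      (TensorProduct.tensorTensorTensorComm k M H A H).toLinearMap)).compl₂ Ac.coact

/-- The coaction on `M ⊗ H`. -/
noncomputable def s3coact (Hb : MonoidalHomBialgebra k H) (μ : M ≃ₗ[k] M) :
    (M ⊗[k] H) →ₗ[k] (M ⊗[k] H) ⊗[k] H :=
  (TensorProduct.assoc k M H H).symm.toLinearMap ∘ₗ
    TensorProduct.map μ.symm.toLinearMap
      ((TensorProduct.map LinearMap.id Hb.aut.toLinearMap) ∘ₗ Hb.comul)

theorem s3act_tmul {Hb : MonoidalHomBialgebra k H} (Ac : HomComoduleAlgebra Hb A)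
    (Mm : HomModule Ac M) (m : M) (h : H) (a : A) :
    s3act Ac Mm (m ⊗ₜ[k] h) a = TensorProduct.map (Mm.act m) (Hb.mul h) (Ac.coact a) := by
  simp only [s3act, LinearMap.compl₂_apply, LinearMap.compr₂_apply, TensorProduct.mk_apply,
    LinearMap.comp_apply, LinearEquiv.coe_coe]
  induction Ac.coact a using TensorProduct.induction_on with
  | zero => simp
  | tmul x y => simp
  | add x y hx hy => simp only [TensorProduct.tmul_add, map_add, hx, hy]

theorem s3coact_tmul (Hb : MonoidalHomBialgebra k H) (μ : M ≃ₗ[k] M) (m : M) (h : H) :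
    s3coact Hb μ (m ⊗ₜ[k] h) = (TensorProduct.assoc k M H H).symm (μ.symm m ⊗ₜ[k]
      (TensorProduct.map LinearMap.id Hb.aut.toLinearMap) (Hb.comul h)) := by
  simp [s3coact]

theorem s3act_act {Hb : MonoidalHomBialgebra k H} (Ac : HomComoduleAlgebra Hb A)
    (Mm : HomModule Ac M) (n : M ⊗[k] H) (a b : A) :
    s3act Ac Mm (s3act Ac Mm n a) (Ac.aut b) =
      s3act Ac Mm (TensorProduct.congr Mm.aut Hb.aut n) (Ac.mul a b) := by
  have e1 : Ac.coact (Ac.aut b) = TensorProduct.map Ac.aut.toLinearMap Hb.aut.toLinearMap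
      (Ac.coact b) := LinearMap.congr_fun Ac.coact_aut b
  have e2 := LinearMap.congr_fun Ac.coact_mul (a ⊗ₜ[k] b)
  simp only [LinearMap.comp_apply, TensorProduct.lift.tmul, TensorProduct.map_tmul,
    LinearEquiv.coe_coe] at e2
  induction n using TensorProduct.induction_on with
  | zero => simp
  | add x y hx hy => simp only [map_add, LinearMap.add_apply, hx, hy]
  | tmul m h =>
    rw [s3act_tmul, TensorProduct.congr_tmul, s3act_tmul, e2]
    clear e2
    induction Ac.coact a using TensorProduct.induction_on with
    | zero => simp
    | add x y hx hy => simp only [map_add, LinearMap.add_apply, TensorProduct.add_tmul, hx, hy]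
    | tmul a0 a1 =>
      rw [TensorProduct.map_tmul, s3act_tmul, e1]
      clear e1
      induction Ac.coact b using TensorProduct.induction_on with
      | zero => simp
      | add x y hx hy => simp only [map_add, TensorProduct.tmul_add, hx, hy]
      | tmul b0 b1 => simp [Mm.act_act, Hb.hom_assoc]

theorem s3act_one {Hb : MonoidalHomBialgebra k H} (Ac : HomComoduleAlgebra Hb A)
    (Mm : HomModule Ac M) (n : M ⊗[k] H) :
    s3act Ac Mm n Ac.one = TensorProduct.congr Mm.aut Hb.aut n := by
  induction n using TensorProduct.induction_on with
  | zero => simp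
  | add x y hx hy => simp only [map_add, LinearMap.add_apply, hx, hy]
  | tmul m h => simp [s3act_tmul, Ac.coact_one, Mm.act_one, Hb.mulOne]

theorem s3aut_act {Hb : MonoidalHomBialgebra k H} (Ac : HomComoduleAlgebra Hb A)
    (Mm : HomModule Ac M) (n : M ⊗[k] H) (a : A) :
    TensorProduct.congr Mm.aut Hb.aut (s3act Ac Mm n a) =
      s3act Ac Mm (TensorProduct.congr Mm.aut Hb.aut n) (Ac.aut a) := by
  have e1 : Ac.coact (Ac.aut a) = TensorProduct.map Ac.aut.toLinearMap Hb.aut.toLinearMap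
      (Ac.coact a) := LinearMap.congr_fun Ac.coact_aut a
  induction n using TensorProduct.induction_on with
  | zero => simp
  | add x y hx hy => simp only [map_add, LinearMap.add_apply, hx, hy]
  | tmul m h =>
    rw [s3act_tmul, TensorProduct.congr_tmul, s3act_tmul, e1]
    clear e1
    induction Ac.coact a using TensorProduct.induction_on with
    | zero => simp
    | add x y hx hy => simp only [map_add, hx, hy]
    | tmul a0 a1 => simp [Mm.aut_act, Hb.aut_mul]

theorem s3coassoc (Hb : MonoidalHomBialgebra k H) (μ : M ≃ₗ[k] M) :
    (TensorProduct.map (TensorProduct.congr μ Hb.aut).symm.toLinearMap Hb.comul) ∘ₗ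
        s3coact Hb μ =
      (TensorProduct.assoc k (M ⊗[k] H) H H).toLinearMap ∘ₗ
        (TensorProduct.map (s3coact Hb μ) Hb.aut.symm.toLinearMap) ∘ₗ s3coact Hb μ := by
  refine TensorProduct.ext' fun m h => ?_
  -- both sides are images of the coassociativity identity
  let F : H ⊗[k] (H ⊗[k] H) →ₗ[k] (M ⊗[k] H) ⊗[k] (H ⊗[k] H) :=
    TensorProduct.map (TensorProduct.mk k M H (μ.symm (μ.symm m)))
      (TensorProduct.map Hb.aut.toLinearMap Hb.aut.toLinearMap)
  have e := congrArg F (LinearMap.congr_fun Hb.coassoc h)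
  simp only [LinearMap.comp_apply, LinearEquiv.coe_coe] at e ⊢
  rw [s3coact_tmul]
  have l : ∀ t : H ⊗[k] H,
      TensorProduct.map (TensorProduct.congr μ Hb.aut).symm.toLinearMap Hb.comul
        ((TensorProduct.assoc k M H H).symm (μ.symm m ⊗ₜ[k]
          TensorProduct.map LinearMap.id Hb.aut.toLinearMap t)) =
      F (TensorProduct.map Hb.aut.symm.toLinearMap Hb.comul t) := by
    intro t
    induction t using TensorProduct.induction_on with
    | zero => simp
    | add x y hx hy => simp only [map_add, TensorProduct.tmul_add, hx, hy]
    | tmul x y =>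
      have e1 : Hb.comul (Hb.aut y) = TensorProduct.map Hb.aut.toLinearMap Hb.aut.toLinearMap
        (Hb.comul y) := LinearMap.congr_fun Hb.comul_aut y
      simp [F, e1]
  have r : ∀ t : H ⊗[k] H,
      TensorProduct.assoc k (M ⊗[k] H) H H
        (TensorProduct.map (s3coact Hb μ) Hb.aut.symm.toLinearMap
        ((TensorProduct.assoc k M H H).symm (μ.symm m ⊗ₜ[k]
          TensorProduct.map LinearMap.id Hb.aut.toLinearMap t))) =
      F (TensorProduct.assoc k H H H (TensorProduct.map Hb.comul Hb.aut.symm.toLinearMap t)) := by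
    intro t
    induction t using TensorProduct.induction_on with
    | zero => simp
    | add x y hx hy => simp only [map_add, TensorProduct.tmul_add, hx, hy]
    | tmul x y =>
      simp only [TensorProduct.map_tmul, TensorProduct.assoc_symm_tmul, s3coact_tmul,
        LinearMap.id_apply, LinearEquiv.coe_coe, LinearEquiv.symm_apply_apply]
      induction Hb.comul x using TensorProduct.induction_on with
      | zero => simp
      | add x y hx hy =>
        simp only [map_add, TensorProduct.tmul_add, TensorProduct.add_tmul, hx, hy]
      | tmul u v => simp [F]
  rw [l, r, e]

theorem s3counit (Hb : MonoidalHomBialgebra k H) (μ : M ≃ₗ[k] M) :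
    (TensorProduct.rid k (M ⊗[k] H)).toLinearMap ∘ₗ
        (TensorProduct.map LinearMap.id Hb.counit) ∘ₗ s3coact Hb μ =
      (TensorProduct.congr μ Hb.aut).symm.toLinearMap := by
  refine TensorProduct.ext' fun m h => ?_
  have e := LinearMap.congr_fun Hb.counit_right h
  simp only [LinearMap.comp_apply, LinearEquiv.coe_coe] at e ⊢
  rw [s3coact_tmul, TensorProduct.congr_symm_tmul, ← e]
  clear e
  induction Hb.comul h using TensorProduct.induction_on with
  | zero => simp
  | add x y hx hy => simp only [map_add, TensorProduct.tmul_add, hx, hy]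
  | tmul x y =>
    have e1 : Hb.counit (Hb.aut y) = Hb.counit y := LinearMap.congr_fun Hb.counit_aut y
    simp [e1]

theorem s3coact_aut (Hb : MonoidalHomBialgebra k H) (μ : M ≃ₗ[k] M) :
    s3coact Hb μ ∘ₗ (TensorProduct.congr μ Hb.aut).toLinearMap =
      (TensorProduct.map (TensorProduct.congr μ Hb.aut).toLinearMap Hb.aut.toLinearMap) ∘ₗ
        s3coact Hb μ := by
  refine TensorProduct.ext' fun m h => ?_
  have e1 : Hb.comul (Hb.aut h) = TensorProduct.map Hb.aut.toLinearMap Hb.aut.toLinearMap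
        (Hb.comul h) := LinearMap.congr_fun Hb.comul_aut h
  simp only [LinearMap.comp_apply, LinearEquiv.coe_coe, TensorProduct.congr_tmul]
  rw [s3coact_tmul, s3coact_tmul, e1]
  clear e1
  induction Hb.comul h using TensorProduct.induction_on with
  | zero => simp
  | add x y hx hy => simp only [map_add, TensorProduct.tmul_add, hx, hy]
  | tmul x y => simp

theorem s3compat {Hb : MonoidalHomBialgebra k H} (Ac : HomComoduleAlgebra Hb A)
    (Mm : HomModule Ac M) :
    s3coact Hb Mm.aut ∘ₗ TensorProduct.lift (s3act Ac Mm) =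
      (TensorProduct.map (TensorProduct.lift (s3act Ac Mm)) (TensorProduct.lift Hb.mul)) ∘ₗ
        (TensorProduct.tensorTensorTensorComm k (M ⊗[k] H) H A H).toLinearMap ∘ₗ
          (TensorProduct.map (s3coact Hb Mm.aut) Ac.coact) := by
  refine TensorProduct.ext_threefold fun m h a => ?_
  have sym : ∀ a0, Mm.aut.symm (Mm.act m a0) = Mm.act (Mm.aut.symm m) (Ac.aut.symm a0) := by
    intro a0
    rw [LinearEquiv.symm_apply_eq, Mm.aut_act]
    simp
  -- the multiplication of `M ⊗ (H ⊗ H)` by `A ⊗ (H ⊗ H)`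
  let G : H ⊗[k] H →ₗ[k] A ⊗[k] (H ⊗[k] H) →ₗ[k] (M ⊗[k] H) ⊗[k] H :=
    (TensorProduct.mk k (H ⊗[k] H) (A ⊗[k] (H ⊗[k] H))).compr₂
      ((TensorProduct.assoc k M H H).symm.toLinearMap ∘ₗ
        TensorProduct.map (Mm.act (Mm.aut.symm m))
          (TensorProduct.map (TensorProduct.lift Hb.mul)
              (Hb.aut.toLinearMap ∘ₗ TensorProduct.lift Hb.mul) ∘ₗ
            (TensorProduct.tensorTensorTensorComm k H H H H).toLinearMap) ∘ₗ
        (TensorProduct.leftComm k (H ⊗[k] H) A (H ⊗[k] H)).toLinearMap)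
  have hG : ∀ h1 h2 a0 x y, G (h1 ⊗ₜ[k] h2) (a0 ⊗ₜ[k] (x ⊗ₜ[k] y)) =
      (Mm.act (Mm.aut.symm m) a0 ⊗ₜ[k] Hb.mul h1 x) ⊗ₜ[k] Hb.aut (Hb.mul h2 y) := by
    intros; simp [G]
  have e := congrArg (G (Hb.comul h)) (LinearMap.congr_fun Ac.coassoc a)
  simp only [LinearMap.comp_apply, LinearEquiv.coe_coe, TensorProduct.lift.tmul,
    TensorProduct.map_tmul] at e ⊢
  rw [s3act_tmul, s3coact_tmul]
  have l : ∀ t : A ⊗[k] H,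
      s3coact Hb Mm.aut (TensorProduct.map (Mm.act m) (Hb.mul h) t) =
      G (Hb.comul h) (TensorProduct.map Ac.aut.symm.toLinearMap Hb.comul t) := by
    intro t
    induction t using TensorProduct.induction_on with
    | zero => simp
    | add x y hx hy => simp only [map_add, hx, hy]
    | tmul a0 a1 =>
      have e2 := LinearMap.congr_fun Hb.comul_mul (h ⊗ₜ[k] a1)
      simp only [LinearMap.comp_apply, TensorProduct.lift.tmul, TensorProduct.map_tmul,
        LinearEquiv.coe_coe] at e2
      rw [TensorProduct.map_tmul, s3coact_tmul, e2, TensorProduct.map_tmul, sym]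
      clear e2 e
      induction Hb.comul h using TensorProduct.induction_on with
      | zero => simp
      | add x y hx hy =>
        simp only [map_add, LinearMap.add_apply, TensorProduct.add_tmul, TensorProduct.tmul_add,
          hx, hy]
      | tmul h1 h2 =>
        induction Hb.comul a1 using TensorProduct.induction_on with
        | zero => simp
        | add x y hx hy => simp only [map_add, TensorProduct.tmul_add, hx, hy]
        | tmul x y =>
          simp only [LinearEquiv.coe_coe]
          rw [hG]
          simp
  have r : ∀ t : A ⊗[k] H,
      TensorProduct.map (TensorProduct.lift (s3act Ac Mm)) (TensorProduct.lift Hb.mul)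
        (TensorProduct.tensorTensorTensorComm k (M ⊗[k] H) H A H
          ((TensorProduct.assoc k M H H).symm (Mm.aut.symm m ⊗ₜ[k]
            (TensorProduct.map LinearMap.id Hb.aut.toLinearMap) (Hb.comul h)) ⊗ₜ[k] t)) =
      G (Hb.comul h) (TensorProduct.assoc k A H H
        (TensorProduct.map Ac.coact Hb.aut.symm.toLinearMap t)) := by
    intro t
    clear e
    induction t using TensorProduct.induction_on with
    | zero => simp
    | add x y hx hy => simp only [map_add, TensorProduct.tmul_add, hx, hy]
    | tmul a0 a1 =>
      induction Hb.comul h using TensorProduct.induction_on with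
      | zero => simp
      | add x y hx hy =>
        simp only [map_add, LinearMap.add_apply, TensorProduct.add_tmul, TensorProduct.tmul_add,
          hx, hy]
      | tmul h1 h2 =>
        simp only [TensorProduct.map_tmul, TensorProduct.assoc_symm_tmul, LinearMap.id_apply,
          LinearEquiv.coe_coe, TensorProduct.tensorTensorTensorComm_tmul,
          TensorProduct.lift.tmul, s3act_tmul]
        induction Ac.coact a0 using TensorProduct.induction_on with
        | zero => simp
        | add x y hx hy => simp only [map_add, TensorProduct.add_tmul, hx, hy]
        | tmul x y =>
          rw [TensorProduct.assoc_tmul, hG]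
          simp [Hb.aut_mul]
  rw [l, r, e]

end Helpers

/-! STATEMENT 3: For a right `(A,β)`-Hom-module `(M,μ)`, the space `M ⊗ H` with
`(m⊗h)·a = m·a₍₀₎ ⊗ h a₍₁₎` and `ρ(m⊗h) = (μ⁻¹(m)⊗h₁)⊗α(h₂)` is a right
`(H,A)`-Hom-Hopf module. -/
theorem statement3
    (k : Type) [Field k] (H : Type) [AddCommGroup H] [Module k H]
    (Hh : MonoidalHomHopf k H)
    (A : Type) [AddCommGroup A] [Module k A]
    (Ac : HomComoduleAlgebra Hh.toMonoidalHomBialgebra A)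
    (M : Type) [AddCommGroup M] [Module k M]
    (Mm : HomModule Ac M) :
    ∃ P : HomHopfModule Ac (M ⊗[k] H),
      P.aut = TensorProduct.congr Mm.aut Hh.aut ∧
      (∀ (m : M) (h : H) (a : A),
        P.act (m ⊗ₜ[k] h) a = (TensorProduct.map (Mm.act m) (Hh.mul h)) (Ac.coact a)) ∧
      (∀ (m : M) (h : H),
        P.coact (m ⊗ₜ[k] h) =
          (TensorProduct.assoc k M H H).symm
            (Mm.aut.symm m ⊗ₜ[k]
              (TensorProduct.map LinearMap.id Hh.aut.toLinearMap) (Hh.comul h))) := by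
  exact ⟨{ act := s3act Ac Mm
           aut := TensorProduct.congr Mm.aut Hh.aut
           act_act := s3act_act Ac Mm
           act_one := s3act_one Ac Mm
           aut_act := s3aut_act Ac Mm
           coact := s3coact Hh.toMonoidalHomBialgebra Mm.aut
           coassoc := s3coassoc _ _
           counit := s3counit _ _
           coact_aut := s3coact_aut _ _
           compat := s3compat Ac Mm }, rfl, s3act_tmul Ac Mm, s3coact_tmul _ _⟩
end

section
/- Let (H,α) be a monoidal Hom-Hopf algebra with bijective antipode S and (A,β) a right (H,α)-Hom-comodule algebra, B=A^{coH}. With f: A⊗H→A⊗H, f(a⊗h)=β(a₍₀₎)⊗a₍₁₎S(α⁻¹(h)), one has can' = f∘can; explicitly, for all a,b∈A: f(β⁻¹(a)b₍₀₎ ⊗ α(b₍₁₎)) = a₍₀₎β⁻¹(b) ⊗ α(a₍₁₎). Consequently, can is bijective if and only if can' is bijective. -/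
open TensorProduct

section Helpers

variable {k : Type} [Field k] {H : Type} [AddCommGroup H] [Module k H]
variable {A : Type} [AddCommGroup A] [Module k A]

/-- Componentwise product on `A ⊗ H`. -/
noncomputable def hMulT {Hb : MonoidalHomBialgebra k H} (Ac : HomComoduleAlgebra Hb A) :
    A ⊗[k] H →ₗ[k] A ⊗[k] H →ₗ[k] A ⊗[k] H :=
  TensorProduct.map₂ Ac.mul Hb.mul

theorem hMulT_tmul {Hb : MonoidalHomBialgebra k H} (Ac : HomComoduleAlgebra Hb A)
    (a b : A) (g h : H) :
    hMulT Ac (a ⊗ₜ g) (b ⊗ₜ h) = Ac.mul a b ⊗ₜ Hb.mul g h := by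
  simp [hMulT]

theorem h_coact_mul {Hb : MonoidalHomBialgebra k H} (Ac : HomComoduleAlgebra Hb A) (a b : A) :
    Ac.coact (Ac.mul a b) = hMulT Ac (Ac.coact a) (Ac.coact b) := by
  have h := LinearMap.congr_fun Ac.coact_mul (a ⊗ₜ[k] b)
  simp only [LinearMap.comp_apply, TensorProduct.lift.tmul, TensorProduct.map_tmul] at h
  rw [h]
  generalize Ac.coact a = x
  generalize Ac.coact b = y
  induction x using TensorProduct.induction_on with
  | zero => simp
  | add x x' hx hx' => simp only [TensorProduct.add_tmul, map_add, hx, hx', LinearMap.add_apply]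
  | tmul u v =>
    induction y using TensorProduct.induction_on with
    | zero => simp
    | add x x' hx hx' => simp only [TensorProduct.tmul_add, map_add, hx, hx']
    | tmul w z => simp [hMulT_tmul]

theorem h_coact_symm {Hb : MonoidalHomBialgebra k H} (Ac : HomComoduleAlgebra Hb A) (a : A) :
    Ac.coact a = TensorProduct.map Ac.aut.toLinearMap Hb.aut.toLinearMap
      (Ac.coact (Ac.aut.symm a)) := by
  have h := LinearMap.congr_fun Ac.coact_aut (Ac.aut.symm a)
  simpa using h

theorem h_coassoc {Hb : MonoidalHomBialgebra k H} (Ac : HomComoduleAlgebra Hb A) (a : A) :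
    TensorProduct.assoc k A H H
        (TensorProduct.map Ac.coact Hb.aut.symm.toLinearMap (Ac.coact a)) =
      TensorProduct.map Ac.aut.symm.toLinearMap Hb.comul (Ac.coact a) :=
  (LinearMap.congr_fun Ac.coassoc a).symm

theorem h_counit {Hb : MonoidalHomBialgebra k H} (Ac : HomComoduleAlgebra Hb A) (a : A) :
    TensorProduct.map LinearMap.id (LinearMap.toSpanSingleton k H Hb.one ∘ₗ Hb.counit)
      (Ac.coact a) = Ac.aut.symm a ⊗ₜ Hb.one := by
  have h := LinearMap.congr_fun Ac.counit a
  simp only [LinearMap.comp_apply, LinearEquiv.coe_coe] at h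
  rw [← h]
  generalize Ac.coact a = x
  induction x using TensorProduct.induction_on with
  | zero => simp
  | add x x' hx hx' => simp only [map_add, hx, hx', TensorProduct.add_tmul]
  | tmul u v => simp [TensorProduct.smul_tmul]

/-- `a ⊗ h ↦ β(a₀) ⊗ P(a₁) h`. -/
noncomputable def hPhi {Hb : MonoidalHomBialgebra k H} (Ac : HomComoduleAlgebra Hb A)
    (P : H →ₗ[k] H) : A ⊗[k] H →ₗ[k] A ⊗[k] H :=
  TensorProduct.map Ac.aut.toLinearMap (TensorProduct.lift (Hb.mul ∘ₗ P)) ∘ₗ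
    (TensorProduct.assoc k A H H).toLinearMap ∘ₗ TensorProduct.map Ac.coact LinearMap.id

theorem hPhi_comp {Hb : MonoidalHomBialgebra k H} (Ac : HomComoduleAlgebra Hb A)
    (P Q : H →ₗ[k] H) (hP : ∀ h, P (Hb.aut h) = Hb.aut (P h))
    (hPQ : TensorProduct.lift Hb.mul ∘ₗ (TensorProduct.map P Q) ∘ₗ Hb.comul =
      LinearMap.toSpanSingleton k H Hb.one ∘ₗ Hb.counit) :
    hPhi Ac P ∘ₗ hPhi Ac (Q ∘ₗ Hb.aut.symm.toLinearMap) =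
      TensorProduct.map LinearMap.id (Hb.aut.toLinearMap ∘ₗ Hb.aut.toLinearMap) := by
  ext a h
  -- linear functional applied to the two sides of coassociativity
  let L : A ⊗[k] (H ⊗[k] H) →ₗ[k] A ⊗[k] H :=
    TensorProduct.map (Ac.aut.toLinearMap ∘ₗ Ac.aut.toLinearMap)
      ((Hb.mul.flip (Hb.aut h)) ∘ₗ TensorProduct.lift Hb.mul ∘ₗ TensorProduct.map P Q)
  have h1 : ∀ x : A ⊗[k] H,
      hPhi Ac P (TensorProduct.map Ac.aut.toLinearMap
        (TensorProduct.lift (Hb.mul ∘ₗ (Q ∘ₗ Hb.aut.symm.toLinearMap)))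
        (TensorProduct.assoc k A H H (x ⊗ₜ h))) =
      L (TensorProduct.assoc k A H H
        (TensorProduct.map Ac.coact Hb.aut.symm.toLinearMap x)) := by
    intro x
    induction x using TensorProduct.induction_on with
    | zero => simp
    | add x x' hx hx' => simp only [map_add, hx, hx', TensorProduct.add_tmul]
    | tmul u v =>
      have hu := h_coact_symm Ac (Ac.aut u)
      rw [LinearEquiv.symm_apply_apply] at hu
      simp only [hPhi, LinearMap.comp_apply, LinearEquiv.coe_coe, TensorProduct.assoc_tmul,
        TensorProduct.map_tmul, hu, TensorProduct.lift.tmul, LinearMap.id_apply]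
      generalize Ac.coact u = y
      induction y using TensorProduct.induction_on with
      | zero => simp
      | add x x' hx hx' => simp only [map_add, hx, hx', TensorProduct.add_tmul]
      | tmul w z => simp [L, hP, Hb.hom_assoc]
  have h2 : ∀ x : A ⊗[k] H, L (TensorProduct.map Ac.aut.symm.toLinearMap Hb.comul x) =
      TensorProduct.map Ac.aut.toLinearMap (Hb.mul.flip (Hb.aut h))
        (TensorProduct.map LinearMap.id
          (LinearMap.toSpanSingleton k H Hb.one ∘ₗ Hb.counit) x) := by
    intro x
    rw [← hPQ]
    induction x using TensorProduct.induction_on with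
    | zero => simp
    | add x x' hx hx' => simp only [map_add, hx, hx']
    | tmul u v => simp [L]
  have h3 := h1 (Ac.coact a)
  rw [h_coassoc, h2, h_counit] at h3
  simp only [TensorProduct.map_tmul, LinearEquiv.coe_coe, LinearEquiv.apply_symm_apply,
    LinearMap.flip_apply, Hb.oneMul] at h3
  simpa [hPhi] using h3

theorem h_first (Hh : MonoidalHomHopf k H)
    (Ac : HomComoduleAlgebra Hh.toMonoidalHomBialgebra A) :
    (hPhi Ac LinearMap.id ∘ₗ
      TensorProduct.map LinearMap.id (Hh.antipode ∘ₗ Hh.aut.symm.toLinearMap)) ∘ₗ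
      canPreLin Ac = canPreLin' Ac := by
  have hS : ∀ h, Hh.antipode (Hh.aut h) = Hh.aut (Hh.antipode h) :=
    fun h => LinearMap.congr_fun Hh.antipode_aut h
  ext a b
  let L : A ⊗[k] (H ⊗[k] H) →ₗ[k] A ⊗[k] H :=
    hMulT Ac (Ac.coact a) ∘ₗ TensorProduct.map Ac.aut.toLinearMap
      (TensorProduct.lift Hh.mul ∘ₗ TensorProduct.map LinearMap.id Hh.antipode)
  have h1 : ∀ y : A ⊗[k] H,
      hPhi Ac LinearMap.id
        (TensorProduct.map LinearMap.id (Hh.antipode ∘ₗ Hh.aut.symm.toLinearMap)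
          (TensorProduct.map (TensorProduct.lift Ac.mul) Hh.aut.toLinearMap
            ((TensorProduct.assoc k A A H).symm (Ac.aut.symm a ⊗ₜ y)))) =
      L (TensorProduct.assoc k A H H
        (TensorProduct.map Ac.coact Hh.aut.symm.toLinearMap y)) := by
    intro y
    induction y using TensorProduct.induction_on with
    | zero => simp
    | add x x' hx hx' => simp only [map_add, hx, hx', TensorProduct.tmul_add]
    | tmul u v =>
      obtain ⟨v, rfl⟩ := Hh.aut.surjective v
      simp only [hPhi, L, LinearMap.comp_apply, LinearEquiv.coe_coe,
        TensorProduct.assoc_symm_tmul,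
        TensorProduct.map_tmul, TensorProduct.lift.tmul, LinearMap.id_apply, h_coact_mul,
        LinearEquiv.symm_apply_apply, hS]
      rw [h_coact_symm Ac a]
      generalize Ac.coact (Ac.aut.symm a) = x
      generalize Ac.coact u = y
      induction x using TensorProduct.induction_on with
      | zero => simp
      | add x x' hx hx' => simp only [map_add, hx, hx', TensorProduct.add_tmul, LinearMap.add_apply]
      | tmul p q =>
        induction y using TensorProduct.induction_on with
        | zero => simp
        | add x x' hx hx' => simp only [map_add, hx, hx', TensorProduct.add_tmul]
        | tmul w z => simp [hMulT_tmul, Hh.hom_assoc, Ac.aut_mul]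
  have h2 : ∀ x : A ⊗[k] H, L (TensorProduct.map Ac.aut.symm.toLinearMap Hh.comul x) =
      hMulT Ac (Ac.coact a)
        (TensorProduct.map LinearMap.id
          (LinearMap.toSpanSingleton k H Hh.one ∘ₗ Hh.counit) x) := by
    intro x
    rw [← Hh.antipode_mul_right]
    induction x using TensorProduct.induction_on with
    | zero => simp
    | add x x' hx hx' => simp only [map_add, hx, hx']
    | tmul u v => simp [L]
  have h3 := h1 (Ac.coact b)
  rw [h_coassoc, h2, h_counit] at h3
  have h4 : ∀ x : A ⊗[k] H, hMulT Ac x (Ac.aut.symm b ⊗ₜ Hh.one) =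
      TensorProduct.map (TensorProduct.lift Ac.mul) Hh.aut.toLinearMap
        ((TensorProduct.assoc k A A H).symm
          (TensorProduct.map LinearMap.id (TensorProduct.comm k H A).toLinearMap
            (TensorProduct.assoc k A H A (x ⊗ₜ Ac.aut.symm b)))) := by
    intro x
    induction x using TensorProduct.induction_on with
    | zero => simp
    | add x x' hx hx' => simp only [map_add, hx, hx', TensorProduct.add_tmul, LinearMap.add_apply]
    | tmul u v => simp [hMulT_tmul, Hh.mulOne]
  rw [h4] at h3
  simpa [canPreLin, canPreLin'] using h3

theorem h_bij (Hh : MonoidalHomHopf k H)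
    (Ac : HomComoduleAlgebra Hh.toMonoidalHomBialgebra A) :
    Function.Bijective (hPhi Ac LinearMap.id) := by
  have hS : ∀ h, Hh.antipode (Hh.aut h) = Hh.aut (Hh.antipode h) :=
    fun h => LinearMap.congr_fun Hh.antipode_aut h
  have e1 := hPhi_comp Ac Hh.antipode LinearMap.id hS Hh.antipode_mul_left
  have e2 := hPhi_comp Ac LinearMap.id Hh.antipode (fun _ => rfl) Hh.antipode_mul_right
  have hb : Function.Bijective (TensorProduct.map (LinearMap.id : A →ₗ[k] A)
      (Hh.aut.toLinearMap ∘ₗ Hh.aut.toLinearMap)) :=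
    (TensorProduct.congr (LinearEquiv.refl k A) (Hh.aut.trans Hh.aut)).bijective
  have hα : Function.Bijective (TensorProduct.map (LinearMap.id : A →ₗ[k] A)
      Hh.aut.toLinearMap) :=
    (TensorProduct.congr (LinearEquiv.refl k A) Hh.aut).bijective
  have e3 : TensorProduct.map (LinearMap.id : A →ₗ[k] A) Hh.aut.toLinearMap ∘ₗ
        hPhi Ac (LinearMap.id ∘ₗ Hh.aut.symm.toLinearMap) =
      hPhi Ac LinearMap.id ∘ₗ TensorProduct.map (LinearMap.id : A →ₗ[k] A)
        Hh.aut.toLinearMap := by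
    ext a h
    simp only [hPhi, TensorProduct.AlgebraTensorModule.curry_apply, LinearMap.restrictScalars_self,
      TensorProduct.curry_apply, LinearMap.comp_apply, LinearEquiv.coe_coe,
      TensorProduct.map_tmul, LinearMap.id_apply]
    generalize Ac.coact a = x
    induction x using TensorProduct.induction_on with
    | zero => simp
    | add x x' hx hx' => simp only [map_add, hx, hx', TensorProduct.add_tmul]
    | tmul u v => simp [Hh.aut_mul]
  constructor
  · have i1 : Function.Injective (hPhi Ac (LinearMap.id ∘ₗ Hh.aut.symm.toLinearMap)) := by
      have := hb.1
      rw [← e1, LinearMap.coe_comp] at this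
      exact this.of_comp
    have i2 := hα.1.comp i1
    rw [← LinearMap.coe_comp, e3, LinearMap.coe_comp] at i2
    exact i2.of_comp_right hα.2
  · have := hb.2
    rw [← e2, LinearMap.coe_comp] at this
    exact this.of_comp

end Helpers

/-! STATEMENT 6: `can' = f ∘ can`, and consequently `can` is bijective iff `can'` is. -/
theorem statement6
    (k : Type) [Field k] (H : Type) [AddCommGroup H] [Module k H]
    (Hh : MonoidalHomHopf k H)
    (Sinv : H →ₗ[k] H)
    (hSinv₁ : Sinv ∘ₗ Hh.antipode = LinearMap.id)
    (hSinv₂ : Hh.antipode ∘ₗ Sinv = LinearMap.id)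
    (A : Type) [AddCommGroup A] [Module k A]
    (Ac : HomComoduleAlgebra Hh.toMonoidalHomBialgebra A)
    (f : A ⊗[k] H →ₗ[k] A ⊗[k] H)
    (hf : f =
      (TensorProduct.map Ac.aut.toLinearMap (TensorProduct.lift Hh.mul)) ∘ₗ
        (TensorProduct.assoc k A H H).toLinearMap ∘ₗ
          (TensorProduct.map Ac.coact (Hh.antipode ∘ₗ Hh.aut.symm.toLinearMap))) :
    -- can' = f ∘ can (at the level of A ⊗ A)
    f ∘ₗ canPreLin Ac = canPreLin' Ac ∧
    -- consequently, the induced map can : A ⊗_B A → A ⊗ H is bijective iff can' is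
    (∀ (canMap can'Map :
        ((A ⊗[k] A) ⧸ relSubR Ac.mul Ac.aut (coinvA Ac) Ac.mul Ac.aut) →ₗ[k] A ⊗[k] H),
      canMap ∘ₗ (relSubR Ac.mul Ac.aut (coinvA Ac) Ac.mul Ac.aut).mkQ = canPreLin Ac →
      can'Map ∘ₗ (relSubR Ac.mul Ac.aut (coinvA Ac) Ac.mul Ac.aut).mkQ = canPreLin' Ac →
      (Function.Bijective canMap ↔ Function.Bijective can'Map)) := by
  have hf' : f = hPhi Ac LinearMap.id ∘ₗ
      TensorProduct.map LinearMap.id (Hh.antipode ∘ₗ Hh.aut.symm.toLinearMap) := by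
    rw [hf]
    ext a h
    simp [hPhi]
  have h1 : f ∘ₗ canPreLin Ac = canPreLin' Ac := by
    rw [hf']
    exact h_first Hh Ac
  have hbS : Function.Bijective Hh.antipode :=
    ⟨Function.LeftInverse.injective (g := Sinv) (fun x => LinearMap.congr_fun hSinv₁ x),
      Function.RightInverse.surjective (g := Sinv) (fun x => LinearMap.congr_fun hSinv₂ x)⟩
  have hfb : Function.Bijective f := by
    rw [hf', LinearMap.coe_comp]
    exact (h_bij Hh Ac).comp (TensorProduct.congr (LinearEquiv.refl k A)
      (Hh.aut.symm.trans (LinearEquiv.ofBijective Hh.antipode hbS))).bijective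
  refine ⟨h1, fun c c' hc hc' => ?_⟩
  have e : c' = f ∘ₗ c := by
    apply Submodule.linearMap_qext
    rw [hc', LinearMap.comp_assoc, hc, h1]
  rw [e, LinearMap.coe_comp]
  exact (Function.Bijective.of_comp_iff' hfb c).symm
end
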